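/- arXiv:1512.08640 — 8 statements merged into one kernel-verified Lean document; each statement's English description precedes it below -/
import Mathlib

section
/- Fix real parameters ν>0, v, B, H with H ≠ 0 and |B| = |v| + 1/ν. If v ≠ 0, then λ = −sgn(v)/ν is the unique real number with ν|λ| ≤ 1 satisfying (λ−v)² − B² = H²·√(1−ν²λ²). If v = 0, then the set of real numbers λ with ν|λ| ≤ 1 satisfying this relation is exactly {1/ν, −1/ν}. In all cases every such root satisfies |λ| = 1/ν. -/
/-- If `H ≠ 0` and `|B| = |v| + 1/ν`, then for `v ≠ 0` the unique root `λ` with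
`ν|λ| ≤ 1` of the dispersion relation is `λ = −sgn(v)/ν`; for `v = 0` the roots are
exactly `{1/ν, −1/ν}`; in all cases every root satisfies `|λ| = 1/ν`. -/
theorem roots_at_threshold (ν v B H : ℝ) (hν : 0 < ν) (hH : H ≠ 0)
    (hB : |B| = |v| + 1 / ν) :
    ((v ≠ 0 →
      {l : ℝ | ν * |l| ≤ 1 ∧
        (l - v) ^ 2 - B ^ 2 = H ^ 2 * Real.sqrt (1 - ν ^ 2 * l ^ 2)}
        = {-(Real.sign v) / ν}) ∧
     (v = 0 →
      {l : ℝ | ν * |l| ≤ 1 ∧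
        (l - v) ^ 2 - B ^ 2 = H ^ 2 * Real.sqrt (1 - ν ^ 2 * l ^ 2)}
        = {1 / ν, -(1 / ν)}) ∧
     (∀ l : ℝ, ν * |l| ≤ 1 →
        (l - v) ^ 2 - B ^ 2 = H ^ 2 * Real.sqrt (1 - ν ^ 2 * l ^ 2) →
        |l| = 1 / ν)) := by
  have ha : 0 < 1 / ν := by positivity
  have key : ∀ l : ℝ, (ν * |l| ≤ 1 ∧
      (l - v) ^ 2 - B ^ 2 = H ^ 2 * Real.sqrt (1 - ν ^ 2 * l ^ 2)) ↔
      (|l| = 1 / ν ∧ |l - v| = |v| + 1 / ν) := by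
    intro l
    constructor
    · rintro ⟨h1, h2⟩
      have h3 : |l| ≤ 1 / ν := by
        rw [le_div_iff₀ hν]; linarith
      have h4 : 0 ≤ H ^ 2 * Real.sqrt (1 - ν ^ 2 * l ^ 2) := by positivity
      have h5 : |B| ≤ |l - v| := sq_le_sq.mp (by linarith)
      have h6 : |l - v| ≤ |l| + |v| := abs_sub l v
      constructor <;> linarith
    · rintro ⟨h1, h2⟩
      have h3 : ν * |l| = 1 := by rw [h1]; field_simp
      refine ⟨h3.le, ?_⟩
      have h4 : ν ^ 2 * l ^ 2 = 1 := by
        rw [← sq_abs l, ← mul_pow, h3, one_pow]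
      have h5 : (l - v) ^ 2 = B ^ 2 := by
        rw [← sq_abs (l - v), ← sq_abs B, h2, hB]
      rw [h4, h5]; simp
  refine ⟨fun hv => ?_, fun hv => ?_, fun l h1 h2 => ((key l).1 ⟨h1, h2⟩).1⟩
  · ext l
    rw [Set.mem_ofPred_eq, key, Set.mem_singleton_iff]
    rcases lt_or_gt_of_ne hv with h | h
    · rw [Real.sign_of_neg h, abs_of_neg h, neg_neg]
      clear key hB
      generalize 1 / ν = a at *
      constructor
      · rintro ⟨h1, h2⟩
        rcases abs_cases l with h3 | h3 <;> rcases abs_cases (l - v) with h4 | h4 <;> linarith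
      · rintro rfl
        exact ⟨abs_of_pos ha, by rw [abs_of_pos (by linarith)]; ring⟩
    · rw [Real.sign_of_pos h, abs_of_pos h, neg_div]
      clear key hB
      generalize 1 / ν = a at *
      constructor
      · rintro ⟨h1, h2⟩
        rcases abs_cases l with h3 | h3 <;> rcases abs_cases (l - v) with h4 | h4 <;> linarith
      · rintro rfl
        exact ⟨by rw [abs_neg, abs_of_pos ha], by rw [abs_of_neg (by linarith)]; ring⟩
  · ext l
    rw [Set.mem_ofPred_eq, key, Set.mem_insert_iff, Set.mem_singleton_iff, hv, sub_zero, abs_zero,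
      zero_add, and_self, abs_eq ha.le]
end

section
/- Fix real parameters ν>0, v, B, H with H ≠ 0. If |v| − 1/ν ≤ |B| < |v| + 1/ν, then there exists at least one real number λ with |λ| < 1/ν satisfying the dispersion relation (λ−v)² − B² = H²·√(1−ν²λ²). -/
theorem aux_pos (ν v b H : ℝ) (hν : 0 < ν) (hH : H ≠ 0) (hv : 0 ≤ v) (hb : 0 ≤ b)
    (h1 : v - 1 / ν ≤ b) (h2 : b < v + 1 / ν) :
    ∃ l : ℝ, |l| < 1 / ν ∧
      (l - v) ^ 2 - b ^ 2 = H ^ 2 * Real.sqrt (1 - ν ^ 2 * l ^ 2) := by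
  obtain ⟨a, ha⟩ : ∃ a, a = 1 / ν := ⟨_, rfl⟩
  rw [← ha] at h1 h2 ⊢
  have ha0 : 0 < a := by rw [ha]; positivity
  have hva : ν * a = 1 := by rw [ha]; field_simp
  have key : ∃ l : ℝ, -a < l ∧ l < a ∧
      (l - v) ^ 2 - b ^ 2 ≤ H ^ 2 * Real.sqrt (1 - ν ^ 2 * l ^ 2) := by
    rcases h1.lt_or_eq with h | h
    · refine ⟨v - b, by linarith, by linarith, ?_⟩
      have : (v - b - v) ^ 2 - b ^ 2 = 0 := by ring
      rw [this]; positivity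
    · have hK : 0 < H ^ 4 * ν ^ 2 := by positivity
      obtain ⟨K, hKd⟩ : ∃ K, K = H ^ 4 * ν ^ 2 := ⟨_, rfl⟩
      rw [← hKd] at hK
      have hD : 0 < K + (a + 2 * b) ^ 2 := by positivity
      obtain ⟨t, ht⟩ : ∃ t, t = K * a / (K + (a + 2 * b) ^ 2) := ⟨_, rfl⟩
      have ht0 : 0 < t := by rw [ht]; positivity
      have hte : t * (K + (a + 2 * b) ^ 2) = K * a := by rw [ht]; field_simp
      have hq : 0 < (a + 2 * b) ^ 2 := by positivity
      have hta : t < a := by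
        rw [ht, div_lt_iff₀ hD]; nlinarith
      refine ⟨a - t, by linarith, by linarith, ?_⟩
      have e1 : (a - t - v) ^ 2 - b ^ 2 = t * (t + 2 * b) := by
        have : v = a + b := by linarith
        rw [this]; ring
      have e2 : 1 - ν ^ 2 * (a - t) ^ 2 = ν ^ 2 * (t * (2 * a - t)) := by
        have : (1:ℝ) = (ν * a) ^ 2 := by rw [hva]; norm_num
        rw [this]; ring
      rw [e1, e2]
      have e3 : H ^ 2 * Real.sqrt (ν ^ 2 * (t * (2 * a - t)))
          = Real.sqrt (K * (t * (2 * a - t))) := by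
        have : K * (t * (2 * a - t)) = (H ^ 2) ^ 2 * (ν ^ 2 * (t * (2 * a - t))) := by
          rw [hKd]; ring
        rw [this, Real.sqrt_mul (show 0 ≤ (H ^ 2) ^ 2 by positivity), Real.sqrt_sq (by positivity)]
      rw [e3]
      apply Real.le_sqrt_of_sq_le
      have s1 : (t + 2 * b) ^ 2 ≤ (a + 2 * b) ^ 2 := by gcongr
      have s2 : t * (t + 2 * b) ^ 2 ≤ t * (a + 2 * b) ^ 2 := by gcongr
      have s3 : t * (t + 2 * b) ^ 2 ≤ K * (2 * a - t) := by nlinarith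
      calc (t * (t + 2 * b)) ^ 2 = t * (t * (t + 2 * b) ^ 2) := by ring
        _ ≤ t * (K * (2 * a - t)) := by gcongr
        _ = _ := by ring
  obtain ⟨l, hl1, hl2, hl⟩ := key
  have hc : ContinuousOn (fun l : ℝ => (l - v) ^ 2 - b ^ 2
      - H ^ 2 * Real.sqrt (1 - ν ^ 2 * l ^ 2)) (Set.Icc (-a) l) := by
    fun_prop
  have hpos : 0 < (-a - v) ^ 2 - b ^ 2 - H ^ 2 * Real.sqrt (1 - ν ^ 2 * (-a) ^ 2) := by
    have : 1 - ν ^ 2 * (-a) ^ 2 = 0 := by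
      have : ν ^ 2 * (-a) ^ 2 = (ν * a) ^ 2 := by ring
      rw [this, hva]; norm_num
    rw [this, Real.sqrt_zero]; nlinarith
  obtain ⟨x, hx, hx0⟩ := intermediate_value_Icc' hl1.le hc
    (show (0:ℝ) ∈ Set.Icc _ _ from ⟨by linarith, hpos.le⟩)
  simp only at hx0
  refine ⟨x, ?_, by linarith⟩
  rw [abs_lt]
  refine ⟨lt_of_le_of_ne hx.1 ?_, hx.2.trans_lt hl2⟩
  intro h
  rw [← h] at hx0
  linarith

/-- If `H ≠ 0` and `|v| − 1/ν ≤ |B| < |v| + 1/ν`, there exists at least one real root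
`λ` with `|λ| < 1/ν` of the dispersion relation `(λ−v)² − B² = H²·√(1−ν²λ²)`. -/
theorem exists_root_intermediate (ν v B H : ℝ) (hν : 0 < ν) (hH : H ≠ 0)
    (h1 : |v| - 1 / ν ≤ |B|) (h2 : |B| < |v| + 1 / ν) :
    ∃ l : ℝ, |l| < 1 / ν ∧
      (l - v) ^ 2 - B ^ 2 = H ^ 2 * Real.sqrt (1 - ν ^ 2 * l ^ 2) := by
  obtain ⟨l, hl, h⟩ := aux_pos ν |v| |B| H hν hH (abs_nonneg _) (abs_nonneg _) h1 h2
  rw [sq_abs] at h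
  rcases abs_cases v with ⟨e, _⟩ | ⟨e, _⟩
  · rw [e] at h
    exact ⟨l, hl, h⟩
  · rw [e] at h
    refine ⟨-l, by rwa [abs_neg], ?_⟩
    rw [neg_sq, ← h]; ring
end

section
/- Fix real parameters ν>0, v, B with |B| < |v| − 1/ν. Then there exists H* > 0 such that: (i) for every real H with |H| > H* there exist at least two distinct real numbers λ with |λ| < 1/ν satisfying the dispersion relation (λ−v)² − B² = H²·√(1−ν²λ²); and (ii) for every real H with 0 < |H| < H* there is no real λ with ν|λ| ≤ 1 satisfying this relation. -/
/-- If `|B| < |v| − 1/ν` then there exists `H* > 0` such that for `|H| > H*` there are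
at least two distinct roots `λ` with `|λ| < 1/ν` of the dispersion relation, while for
`0 < |H| < H*` there is no root with `ν|λ| ≤ 1`. -/
theorem critical_vacuum_field (ν v B : ℝ) (hν : 0 < ν) (hB : |B| < |v| - 1 / ν) :
    ∃ Hstar : ℝ, 0 < Hstar ∧
      (∀ H : ℝ, |H| > Hstar →
        ∃ l₁ l₂ : ℝ, l₁ ≠ l₂ ∧ |l₁| < 1 / ν ∧ |l₂| < 1 / ν ∧
          (l₁ - v) ^ 2 - B ^ 2 = H ^ 2 * Real.sqrt (1 - ν ^ 2 * l₁ ^ 2) ∧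
          (l₂ - v) ^ 2 - B ^ 2 = H ^ 2 * Real.sqrt (1 - ν ^ 2 * l₂ ^ 2)) ∧
      (∀ H : ℝ, 0 < |H| → |H| < Hstar →
        ¬ ∃ l : ℝ, ν * |l| ≤ 1 ∧
          (l - v) ^ 2 - B ^ 2 = H ^ 2 * Real.sqrt (1 - ν ^ 2 * l ^ 2)) := by
  obtain ⟨a, ha⟩ : ∃ a : ℝ, a = 1 / ν := ⟨_, rfl⟩
  rw [← ha] at hB ⊢
  have ha0 : 0 < a := by rw [ha]; positivity
  have hνa : ν * a = 1 := by rw [ha]; field_simp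
  have hpos : ∀ l ∈ Set.Icc (-a) a, 0 < (l - v) ^ 2 - B ^ 2 := by
    intro l hl
    have h1 : |l| ≤ a := abs_le.2 hl
    have h2 : |v| - |l| ≤ |v - l| := abs_sub_abs_le_abs_sub v l
    rw [abs_sub_comm] at h2
    have h3 : |B| < |l - v| := by linarith
    have := sq_lt_sq.2 h3
    linarith
  have hcs : Continuous (fun l : ℝ => Real.sqrt (1 - ν ^ 2 * l ^ 2)) := by fun_prop
  have hcf : Continuous (fun l : ℝ => (l - v) ^ 2 - B ^ 2) := by fun_prop
  have hsa : Real.sqrt (1 - ν ^ 2 * a ^ 2) = 0 := by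
    rw [← mul_pow, hνa]; norm_num
  have hsa' : Real.sqrt (1 - ν ^ 2 * (-a) ^ 2) = 0 := by
    rw [neg_sq]; exact hsa
  obtain ⟨l0, hl0, hmax⟩ := (isCompact_Icc (a := -a) (b := a)).exists_isMaxOn
    ⟨0, by constructor <;> linarith⟩
    (f := fun l : ℝ => Real.sqrt (1 - ν ^ 2 * l ^ 2) / ((l - v) ^ 2 - B ^ 2))
    (hcs.continuousOn.div hcf.continuousOn (fun l hl => (hpos l hl).ne'))
  have hmax' : ∀ l ∈ Set.Icc (-a) a, Real.sqrt (1 - ν ^ 2 * l ^ 2) / ((l - v) ^ 2 - B ^ 2) ≤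
      Real.sqrt (1 - ν ^ 2 * l0 ^ 2) / ((l0 - v) ^ 2 - B ^ 2) := fun l hl => hmax hl
  have h0m : (0 : ℝ) ∈ Set.Icc (-a) a := by constructor <;> linarith
  have hf0 := hpos l0 hl0
  obtain ⟨M, hM⟩ : ∃ M : ℝ,
    M = Real.sqrt (1 - ν ^ 2 * l0 ^ 2) / ((l0 - v) ^ 2 - B ^ 2) := ⟨_, rfl⟩
  rw [← hM] at hmax'
  have hMpos : 0 < M := by
    refine lt_of_lt_of_le ?_ (hmax' 0 h0m)
    have := hpos 0 h0m
    apply div_pos _ this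
    norm_num
  have hs0 : Real.sqrt (1 - ν ^ 2 * l0 ^ 2) = M * ((l0 - v) ^ 2 - B ^ 2) := by
    rw [hM]; field_simp
  refine ⟨Real.sqrt (1 / M), by positivity, ?_, ?_⟩
  · intro H hH
    have hH2 : 1 < H ^ 2 * M := by
      have h1 := (Real.sqrt_lt' (lt_of_le_of_lt (Real.sqrt_nonneg _) hH)).1 hH
      rw [sq_abs, div_lt_iff₀ hMpos] at h1
      exact h1
    have hc : Continuous (fun l : ℝ => H ^ 2 * Real.sqrt (1 - ν ^ 2 * l ^ 2) -
      ((l - v) ^ 2 - B ^ 2)) := by fun_prop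
    have hp : 0 < H ^ 2 * Real.sqrt (1 - ν ^ 2 * l0 ^ 2) - ((l0 - v) ^ 2 - B ^ 2) := by
      rw [hs0]; nlinarith
    have hn1 : H ^ 2 * Real.sqrt (1 - ν ^ 2 * a ^ 2) - ((a - v) ^ 2 - B ^ 2) < 0 := by
      rw [hsa]
      have := hpos a ⟨by linarith, le_refl _⟩
      linarith
    have hn2 : H ^ 2 * Real.sqrt (1 - ν ^ 2 * (-a) ^ 2) - ((-a - v) ^ 2 - B ^ 2) < 0 := by
      rw [hsa']
      have := hpos (-a) ⟨le_refl _, by linarith⟩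
      linarith
    have i1 := intermediate_value_Ioo hl0.1 hc.continuousOn
    have i2 := intermediate_value_Ioo' hl0.2 hc.continuousOn
    obtain ⟨l₁, hl₁, e1⟩ := i1 ⟨hn2, hp⟩
    obtain ⟨l₂, hl₂, e2⟩ := i2 ⟨hn1, hp⟩
    have := hl0.1
    have := hl0.2
    refine ⟨l₁, l₂, (hl₁.2.trans hl₂.1).ne, abs_lt.2 ⟨hl₁.1, by linarith [hl₁.2]⟩,
      abs_lt.2 ⟨by linarith [hl₂.1], hl₂.2⟩, ?_, ?_⟩
    · simp only at e1; linarith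
    · simp only at e2; linarith
  · rintro H hH0 hH ⟨l, hl, e⟩
    have hH2 : H ^ 2 * M < 1 := by
      have h1 := (Real.lt_sqrt hH0.le).1 hH
      rw [sq_abs, lt_div_iff₀ hMpos] at h1
      exact h1
    have hlm : l ∈ Set.Icc (-a) a := by
      apply abs_le.1
      rw [ha, le_div_iff₀ hν]
      linarith
    have hf := hpos l hlm
    have h2 := hmax' l hlm
    rw [div_le_iff₀ hf] at h2
    have h3 := mul_le_mul_of_nonneg_left h2 (sq_nonneg H)
    nlinarith
end

section
/- Fix σ ∈ ℝ. Define Λ̃(k,ℓ) for real k, ℓ with (k,ℓ) ≠ (0,0) and k+ℓ ≠ 0 by Λ̃(k,ℓ) = (1/2)[ (k−ℓ)(|k|ℓ − k|ℓ|)/(|k+ℓ|+|k|+|ℓ|) − kℓ|ℓ|/(|k+ℓ|+|ℓ|) − |k|kℓ/(|k+ℓ|+|k|) + σ(k² + ℓ² + kℓ − |kℓ|) ] + (1/2)·sgn(k+ℓ)·[ (|k|−|ℓ|)(|k|ℓ − k|ℓ|)/(|k+ℓ|+|k|+|ℓ|) + kℓ²/(|k+ℓ|+|ℓ|) + k²ℓ/(|k+ℓ|+|k|)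 − k|ℓ| − |k|ℓ − σ(k+ℓ)(|k|+|ℓ|) ]. Then for all such (k,ℓ), Λ̃(k,ℓ) = −(1+σ) · 2|k+ℓ|·|k|·|ℓ| / (|k+ℓ|+|k|+|ℓ|). In particular Λ̃(k,ℓ) = −(1+σ)kℓ whenever k>0 and ℓ>0, and Λ̃(k,ℓ) = (1+σ)ℓ(k+ℓ) whenever k+ℓ>0 and ℓ<0. -/
/-- The symmetrized kernel `Λ̃` of the amplitude equation. -/
noncomputable def LamTilde (σ k l : ℝ) : ℝ :=
  (1 / 2) * ((k - l) * (|k| * l - k * |l|) / (|k + l| + |k| + |l|)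
      - k * l * |l| / (|k + l| + |l|)
      - |k| * k * l / (|k + l| + |k|)
      + σ * (k ^ 2 + l ^ 2 + k * l - |k * l|))
  + (1 / 2) * Real.sign (k + l) *
      ((|k| - |l|) * (|k| * l - k * |l|) / (|k + l| + |k| + |l|)
        + k * l ^ 2 / (|k + l| + |l|)
        + k ^ 2 * l / (|k + l| + |k|)
        - k * |l| - |k| * l
        - σ * (k + l) * (|k| + |l|))

theorem lamT_neg (σ k l : ℝ) : LamTilde σ (-k) (-l) = LamTilde σ k l := by
  have h : -k + -l = -(k + l) := by ring
  unfold LamTilde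
  rw [h, Real.sign_neg, neg_mul_neg]
  simp only [abs_neg]
  ring

theorem lamT_symm (σ k l : ℝ) : LamTilde σ k l = LamTilde σ l k := by
  unfold LamTilde
  rw [add_comm l k, mul_comm l k]
  ring

theorem lamT_pos (σ k l : ℝ) (hk : 0 ≤ k) (hl : 0 ≤ l) (h : 0 < k + l) :
    LamTilde σ k l = -(1 + σ) * (k * l) := by
  unfold LamTilde
  rw [Real.sign_of_pos h, abs_of_nonneg (mul_nonneg hk hl), abs_of_pos h, abs_of_nonneg hk,
    abs_of_nonneg hl]
  ring

theorem lamT_mix (σ k l : ℝ) (h : 0 < k + l) (hl : l < 0) :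
    LamTilde σ k l = (1 + σ) * (l * (k + l)) := by
  have hk : 0 < k := by linarith
  unfold LamTilde
  rw [Real.sign_of_pos h, abs_of_neg (mul_neg_of_pos_of_neg hk hl), abs_of_pos h, abs_of_pos hk,
    abs_of_neg hl]
  have h1 : k + l + k + -l = 2 * k := by ring
  have h2 : k + l + -l = k := by ring
  have h3 : k + l + k ≠ 0 := by linarith
  rw [h1, h2]
  have := hk.ne'
  field_simp
  ring

theorem lamT_main_pos (σ k l : ℝ) (h : 0 < k + l) :
    LamTilde σ k l = -(1 + σ) * (2 * |k + l| * |k| * |l|) / (|k + l| + |k| + |l|) := by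
  rcases lt_or_ge l 0 with hl | hl
  · have hk : 0 < k := by linarith
    rw [lamT_mix σ k l h hl, abs_of_pos h, abs_of_pos hk, abs_of_neg hl]
    have h1 : k + l + k + -l = 2 * k := by ring
    rw [h1, eq_div_iff (by positivity)]
    ring
  rcases lt_or_ge k 0 with hk | hk
  · have hl : 0 < l := by linarith
    rw [lamT_symm, lamT_mix σ l k (by linarith) hk, abs_of_pos h, abs_of_neg hk, abs_of_pos hl]
    have h1 : k + l + -k + l = 2 * l := by ring
    rw [h1, eq_div_iff (by positivity)]
    ring
  · rw [lamT_pos σ k l hk hl h, abs_of_pos h, abs_of_nonneg hk, abs_of_nonneg hl,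
      eq_div_iff (by positivity)]
    ring

/-- For `(k,ℓ) ≠ (0,0)` and `k+ℓ ≠ 0`, the symmetrized kernel simplifies to
`Λ̃(k,ℓ) = −(1+σ)·2|k+ℓ||k||ℓ|/(|k+ℓ|+|k|+|ℓ|)`; in particular `Λ̃(k,ℓ) = −(1+σ)kℓ`
for `k,ℓ > 0` and `Λ̃(k,ℓ) = (1+σ)ℓ(k+ℓ)` for `k+ℓ > 0`, `ℓ < 0`. -/
theorem lamTilde_simplification (σ : ℝ) :
    (∀ k l : ℝ, (k, l) ≠ (0, 0) → k + l ≠ 0 →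
      LamTilde σ k l = -(1 + σ) * (2 * |k + l| * |k| * |l|) / (|k + l| + |k| + |l|)) ∧
    (∀ k l : ℝ, 0 < k → 0 < l → LamTilde σ k l = -(1 + σ) * (k * l)) ∧
    (∀ k l : ℝ, 0 < k + l → l < 0 → LamTilde σ k l = (1 + σ) * (l * (k + l))) := by
  refine ⟨fun k l _ h => ?_, fun k l hk hl => lamT_pos σ k l hk.le hl.le (by linarith),
    fun k l h hl => lamT_mix σ k l h hl⟩
  rcases lt_or_gt_of_ne h with h | h
  · have := lamT_main_pos σ (-k) (-l) (by linarith)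
    have e : -k + -l = -(k + l) := by ring
    rw [lamT_neg, e] at this
    simpa only [abs_neg] using this
  · exact lamT_main_pos σ k l h
end

section
/- Define S:ℝ²→ℝ by S(k,ℓ) = Λ(k,ℓ)/|kℓ(k+ℓ)|^{1/2} if kℓ(k+ℓ) ≠ 0 and S(k,ℓ) = 0 otherwise, where Λ(k,ℓ) = 2|k+ℓ|·|k|·|ℓ|/(|k+ℓ|+|k|+|ℓ|) for (k,ℓ) ≠ (0,0) and Λ(0,0) = 0. Then for all real k, ℓ one has |S(k−ℓ,ℓ)| ≤ min{ |k|^{1/2}, |k−ℓ|^{1/2}, |ℓ|^{1/2} }. -/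
/-- The kernel `Λ` of the surface-wave amplitude equation. -/
noncomputable def Lam (k l : ℝ) : ℝ :=
  if (k, l) = ((0 : ℝ), (0 : ℝ)) then 0
  else 2 * |k + l| * |k| * |l| / (|k + l| + |k| + |l|)

/-- The kernel `S` of the noncanonical form of the amplitude equation. -/
noncomputable def Sker (k l : ℝ) : ℝ :=
  if k * l * (k + l) ≠ 0 then Lam k l / Real.sqrt |k * l * (k + l)| else 0

theorem sker_aux (a b c : ℝ) (ha : 0 < a) (hb : 0 < b) (hc : 0 < c) :
    2 * a * b * c / (a + b + c) / Real.sqrt (a * b * c) ≤ Real.sqrt a := by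
  have hx := Real.sqrt_pos.mpr ha
  have hy := Real.sqrt_pos.mpr hb
  have hz := Real.sqrt_pos.mpr hc
  have ea := Real.sq_sqrt ha.le
  have eb := Real.sq_sqrt hb.le
  have ec := Real.sq_sqrt hc.le
  rw [Real.sqrt_mul (by positivity), Real.sqrt_mul ha.le]
  generalize Real.sqrt a = x at *
  generalize Real.sqrt b = y at *
  generalize Real.sqrt c = z at *
  subst ea eb ec
  rw [div_le_iff₀ (by positivity), div_le_iff₀ (by positivity)]
  have h : 0 ≤ x ^ 2 * y * z * (x ^ 2 + (y - z) ^ 2) := by positivity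
  nlinarith [h]

theorem sker_eq (k l : ℝ) (h : (k - l) * l * (k - l + l) ≠ 0) :
    Sker (k - l) l = 2 * |k| * |k - l| * |l| / (|k| + |k - l| + |l|)
      / Real.sqrt (|k| * |k - l| * |l|) := by
  have hl : l ≠ 0 := by
    rintro rfl
    simp at h
  have e : |(k - l) * l * (k - l + l)| = |k| * |k - l| * |l| := by
    rw [sub_add_cancel, abs_mul, abs_mul]; ring
  unfold Sker Lam
  rw [if_pos h, if_neg (by simp [hl]), e, sub_add_cancel]

/-- The pointwise bound `|S(k−ℓ,ℓ)| ≤ min{|k|^{1/2}, |k−ℓ|^{1/2}, |ℓ|^{1/2}}`. -/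
theorem sker_min_bound :
    ∀ k l : ℝ,
      |Sker (k - l) l| ≤
        min (Real.sqrt |k|) (min (Real.sqrt |k - l|) (Real.sqrt |l|)) := by
  intro k l
  by_cases h : (k - l) * l * (k - l + l) ≠ 0
  · rw [sker_eq k l h]
    rw [sub_add_cancel] at h
    have ha : 0 < |k| := abs_pos.mpr (right_ne_zero_of_mul h)
    have hb : 0 < |k - l| := abs_pos.mpr (left_ne_zero_of_mul (left_ne_zero_of_mul h))
    have hc : 0 < |l| := abs_pos.mpr (right_ne_zero_of_mul (left_ne_zero_of_mul h))
    generalize |k| = a at *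
    generalize |k - l| = b at *
    generalize |l| = c at *
    rw [abs_of_nonneg (by positivity)]
    refine le_min (sker_aux a b c ha hb hc) (le_min ?_ ?_)
    · have h1 : 2 * a * b * c = 2 * b * a * c := by ring
      have h2 : a + b + c = b + a + c := by ring
      have h3 : a * b * c = b * a * c := by ring
      rw [h1, h2, h3]
      exact sker_aux b a c hb ha hc
    · have h1 : 2 * a * b * c = 2 * c * a * b := by ring
      have h2 : a + b + c = c + a + b := by ring
      have h3 : a * b * c = c * a * b := by ring
      rw [h1, h2, h3]
      exact sker_aux c a b hc ha hb
  · have : Sker (k - l) l = 0 := by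
      unfold Sker
      rw [if_neg h]
    rw [this, abs_zero]
    positivity
end

section
/- For every real s > 0 there exists a constant C_s > 0 such that for all real numbers k and ℓ: | k|k|^{2s} − (k−ℓ)|k−ℓ|^{2s} − ℓ|ℓ|^{2s} | ≤ C_s ( |k|^s |k−ℓ|^s |ℓ| + |k|^s |k−ℓ| |ℓ|^s + |k| |k−ℓ|^s |ℓ|^s ). -/
theorem aux_pow (n : ℕ) (t : ℝ) (h0 : 0 ≤ t) (h1 : t ≤ 1) : (1 + t) ^ n ≤ 1 + 3 ^ n * t := by
  induction n with
  | zero => simp [h0]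
  | succ n ih =>
    have h3 : (1 : ℝ) ≤ 3 ^ n := one_le_pow₀ (by norm_num)
    rw [pow_succ, pow_succ]
    have := mul_le_mul_of_nonneg_right ih (by linarith : 0 ≤ 1 + t)
    have h4 : (3 : ℝ) ^ n * t * t ≤ 3 ^ n * t * 1 :=
      mul_le_mul_of_nonneg_left h1 (by positivity)
    have h5 : t ≤ 3 ^ n * t := le_mul_of_one_le_left h0 h3
    nlinarith

theorem aux_rpow (p : ℝ) : ∃ C : ℝ, 0 < C ∧ ∀ t : ℝ, 0 ≤ t → t ≤ 1 →
    (1 + t) ^ p ≤ 1 + C * t := by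
  refine ⟨3 ^ (⌈p⌉₊), by positivity, fun t h0 h1 => ?_⟩
  refine le_trans ?_ (aux_pow ⌈p⌉₊ t h0 h1)
  rw [← Real.rpow_natCast]
  exact Real.rpow_le_rpow_of_exponent_le (by linarith) (Nat.le_ceil p)

theorem aux_main (s : ℝ) (hs : 0 < s) : ∃ C : ℝ, 0 < C ∧ ∀ y z : ℝ, 0 ≤ z → z ≤ y →
    |(y + z) * (y + z) ^ (2 * s) - y * y ^ (2 * s) - z * z ^ (2 * s)| ≤
      C * ((y + z) ^ s * y ^ s * z) := by
  obtain ⟨C, hC, h⟩ := aux_rpow (2 * s)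
  refine ⟨C + 2 ^ s, by positivity, fun y z hz hzy => ?_⟩
  rcases (hz.trans hzy).eq_or_lt with hy | hy
  · have : z = 0 := by linarith
    subst this; subst hy; simp
  have hsq : ∀ x : ℝ, 0 ≤ x → x ^ (2 * s) = x ^ s * x ^ s := fun x hx => by
    rw [two_mul, Real.rpow_add_of_nonneg hx hs.le hs.le]
  have hx : 0 ≤ y + z := by linarith
  have e1 : y ^ (2 * s) ≤ (y + z) ^ (2 * s) :=
    Real.rpow_le_rpow hy.le (by linarith) (by linarith)
  have e2 : z ^ (2 * s) ≤ (y + z) ^ (2 * s) :=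
    Real.rpow_le_rpow hz (by linarith) (by linarith)
  have e3 : (y + z) ^ s ≤ 2 ^ s * y ^ s := by
    rw [← Real.mul_rpow (by norm_num) hy.le]
    exact Real.rpow_le_rpow hx (by linarith) hs.le
  have e4 : y ^ s ≤ (y + z) ^ s := Real.rpow_le_rpow hy.le (by linarith) hs.le
  have e5 : y * (y + z) ^ (2 * s) ≤ y * y ^ (2 * s) + C * z * y ^ (2 * s) := by
    have := h (z / y) (by positivity) ((div_le_one hy).2 hzy)
    have e : y + z = y * (1 + z / y) := by field_simp
    rw [e, Real.mul_rpow hy.le (by positivity)]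
    calc _ ≤ y * (y ^ (2 * s) * (1 + C * (z / y))) := by gcongr
      _ = _ := by field_simp
  have p1 : 0 ≤ y ^ s := by positivity
  have p2 : 0 ≤ (y + z) ^ s := by positivity
  have p3 : 0 ≤ z ^ (2 * s) := by positivity
  have e6 : C * z * y ^ (2 * s) ≤ C * ((y + z) ^ s * y ^ s * z) := by
    rw [hsq y hy.le]
    calc _ ≤ C * z * ((y + z) ^ s * y ^ s) := by gcongr
      _ = _ := by ring
  have e7 : z * (y + z) ^ (2 * s) ≤ 2 ^ s * ((y + z) ^ s * y ^ s * z) := by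
    rw [hsq _ hx]
    calc _ ≤ z * ((y + z) ^ s * (2 ^ s * y ^ s)) := by gcongr
      _ = _ := by ring
  have f1 := mul_le_mul_of_nonneg_left e1 hy.le
  have f2 := mul_le_mul_of_nonneg_left e2 hz
  have f3 := mul_nonneg hz p3
  rw [abs_of_nonneg (by linarith)]
  linarith

theorem aux_sym (s : ℝ) (hs : 0 < s) : ∃ C : ℝ, 0 < C ∧ ∀ x y z : ℝ, 0 ≤ y → 0 ≤ z → x = y + z →
    |x * x ^ (2 * s) - y * y ^ (2 * s) - z * z ^ (2 * s)| ≤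
      C * (x ^ s * y ^ s * z + x ^ s * y * z ^ s + x * y ^ s * z ^ s) := by
  obtain ⟨C, hC, h⟩ := aux_main s hs
  refine ⟨C, hC, ?_⟩
  rintro x y z hy hz rfl
  have t1 : 0 ≤ (y + z) ^ s * y ^ s * z := by positivity
  have t2 : 0 ≤ (y + z) ^ s * y * z ^ s := by positivity
  have t3 : 0 ≤ (y + z) * y ^ s * z ^ s := by positivity
  rcases le_total z y with hzy | hzy
  · refine (h y z hz hzy).trans (mul_le_mul_of_nonneg_left ?_ hC.le)
    linarith
  · have := h z y hy hzy
    rw [add_comm z y, sub_right_comm] at this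
    refine this.trans (mul_le_mul_of_nonneg_left ?_ hC.le)
    linarith

/-- For every `s > 0` there is `C_s > 0` such that for all real `k, ℓ`:
`|k|k|^{2s} − (k−ℓ)|k−ℓ|^{2s} − ℓ|ℓ|^{2s}| ≤ C_s(|k|^s|k−ℓ|^s|ℓ| + |k|^s|k−ℓ||ℓ|^s + |k||k−ℓ|^s|ℓ|^s)`. -/
theorem symbol_commutator_estimate (s : ℝ) (hs : 0 < s) :
    ∃ C : ℝ, 0 < C ∧ ∀ k l : ℝ,
      |k * |k| ^ (2 * s) - (k - l) * |k - l| ^ (2 * s) - l * |l| ^ (2 * s)| ≤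
        C * (|k| ^ s * |k - l| ^ s * |l| + |k| ^ s * |k - l| * |l| ^ s +
          |k| * |k - l| ^ s * |l| ^ s) := by
  obtain ⟨C, hC, h⟩ := aux_sym s hs
  refine ⟨C, hC, fun k l => ?_⟩
  rcases le_total 0 k with hk | hk <;> rcases le_total 0 l with hl | hl <;>
    rcases le_total 0 (k - l) with ha | ha <;>
    simp only [abs_of_nonneg, abs_of_nonpos, hk, hl, ha]
  · convert h k (k - l) l ha hl (by ring) using 1
  · convert h l k (-(k - l)) hk (by linarith) (by ring) using 1
    · rw [← abs_neg]; congr 1; ring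
    · ring
  · convert h (k - l) k (-l) hk (by linarith) (by ring) using 1
    · rw [← abs_neg]; congr 1; ring
    · ring
  · have h1 : k = 0 := by linarith
    have h2 : l = 0 := by linarith
    subst h1; subst h2; simp
  · have h1 : k = 0 := by linarith
    have h2 : l = 0 := by linarith
    subst h1; subst h2; simp
  · convert h (-(k - l)) (-k) l (by linarith) hl (by ring) using 1
    · congr 1; ring
    · ring
  · convert h (-l) (-k) (k - l) (by linarith) ha (by ring) using 1
    · congr 1; ring
    · ring
  · convert h (-k) (-(k - l)) (-l) (by linarith) (by linarith) (by ring) using 1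
    rw [← abs_neg]; congr 1; ring
end

section
/- Let s ≥ 0 and let S:ℝ²→ℝ be the kernel S(k,ℓ) = Λ(k,ℓ)/|kℓ(k+ℓ)|^{1/2} if kℓ(k+ℓ) ≠ 0 and 0 otherwise, with Λ(k,ℓ) = 2|k+ℓ|·|k|·|ℓ|/(|k+ℓ|+|k|+|ℓ|) for (k,ℓ)≠(0,0) and Λ(0,0)=0. Let f:ℝ→ℂ be measurable with f(−k) = conj(f(k)) for almost every k, and assume that the function (k,ℓ) ↦ (|k|^{2s+1} + |k−ℓ|^{2s+1} + |ℓ|^{2s+1}) |S(k−ℓ,ℓ)| |f(k−ℓ)| |f(ℓ)| |f(−k)| is integrable on ℝ². Then ∬_{ℝ²} k|k|^{2s} S(k−ℓ,ℓ) f(k−ℓ) f(ℓ) f(−k) dℓ dk = −∬_{ℝ²} (k−ℓ)|k−ℓ|^{2s} S(k−ℓ,ℓ) f(k−ℓ) f(ℓ) f(−k) dℓ dk = −∬_{ℝ²} ℓ|ℓ|^{2s} S(k−ℓ,ℓ) f(k−ℓ) f(ℓ) f(−k) dℓ dk, and hence ∬_{ℝ²} k|k|^{2s} S(k−ℓ,ℓ)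 f(k−ℓ) f(ℓ) f(−k) dℓ dk = (1/3) ∬_{ℝ²} ( k|k|^{2s} − (k−ℓ)|k−ℓ|^{2s} − ℓ|ℓ|^{2s} ) S(k−ℓ,ℓ) f(k−ℓ) f(ℓ) f(−k) dℓ dk. -/
open MeasureTheory

lemma Lam_swap_left (a b : ℝ) (h : a * b * (a + b) ≠ 0) : Lam (-(a + b)) b = Lam a b := by
  have ha : a ≠ 0 := by rintro rfl; simp at h
  have hb : b ≠ 0 := by rintro rfl; simp at h
  have h1 : -(a + b) + b = -a := by ring
  unfold Lam
  simp only [Prod.mk.injEq, ha, hb, and_false, if_false, h1, abs_neg]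
  congr 1 <;> ring

lemma Lam_symm (a b : ℝ) (h : a * b * (a + b) ≠ 0) : Lam a b = Lam b a := by
  have ha : a ≠ 0 := by rintro rfl; simp at h
  have hb : b ≠ 0 := by rintro rfl; simp at h
  unfold Lam
  simp only [Prod.mk.injEq, ha, hb, and_false, if_false, add_comm b a]
  congr 1 <;> ring

lemma Sker_symm (a b : ℝ) : Sker a b = Sker b a := by
  have h1 : b * a * (b + a) = a * b * (a + b) := by ring
  unfold Sker
  rw [h1]
  split_ifs with h
  · rw [Lam_symm a b h]
  · rfl

lemma Sker_swap_left (a b : ℝ) : Sker (-(a + b)) b = Sker a b := by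
  have h1 : -(a + b) * b * (-(a + b) + b) = a * b * (a + b) := by ring
  unfold Sker
  rw [h1]
  split_ifs with h
  · rw [Lam_swap_left a b h]
  · rfl

lemma Sker_swap_right (a b : ℝ) : Sker a (-(a + b)) = Sker a b := by
  rw [Sker_symm, add_comm, Sker_swap_left, Sker_symm]

lemma measurable_Sker : Measurable (fun p : ℝ × ℝ => Sker p.1 p.2) := by
  unfold Sker Lam
  refine Measurable.ite ?_ (Measurable.div (Measurable.ite ?_ ?_ ?_) ?_) ?_
  · exact (measurableSet_singleton (0 : ℝ)).compl.preimage
      (f := fun p : ℝ × ℝ => p.1 * p.2 * (p.1 + p.2)) (by fun_prop)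
  · exact measurableSet_singleton ((0 : ℝ), (0 : ℝ))
  all_goals fun_prop

/-- The involution `(k, l) ↦ (l - k, l)`. -/
def invA : ℝ × ℝ ≃ᵐ ℝ × ℝ where
  toFun p := (p.2 - p.1, p.2)
  invFun p := (p.2 - p.1, p.2)
  left_inv p := by simp
  right_inv p := by simp
  measurable_toFun := by dsimp; fun_prop
  measurable_invFun := by dsimp; fun_prop

/-- The involution `(k, l) ↦ (-l, -k)`. -/
def invB : ℝ × ℝ ≃ᵐ ℝ × ℝ where
  toFun p := (-p.2, -p.1)
  invFun p := (-p.2, -p.1)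
  left_inv p := by simp
  right_inv p := by simp
  measurable_toFun := by dsimp; fun_prop
  measurable_invFun := by dsimp; fun_prop

lemma mp_invB : MeasurePreserving invB := by
  have h := ((Measure.measurePreserving_neg (volume : Measure ℝ)).prod
    (Measure.measurePreserving_neg (volume : Measure ℝ))).comp
    (Measure.measurePreserving_swap (μ := (volume : Measure ℝ)) (ν := (volume : Measure ℝ)))
  exact h

lemma mp_invA : MeasurePreserving invA := by
  have h1 : MeasurePreserving (fun p : ℝ × ℝ => (p.1, p.1 - p.2))
      ((volume : Measure ℝ).prod volume) ((volume : Measure ℝ).prod volume) := by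
    refine MeasurePreserving.skew_product (g := fun x y : ℝ => x - y)
      (MeasurePreserving.id _) (by fun_prop) ?_
    filter_upwards with x
    exact (Measure.measurePreserving_sub_left volume x).map_eq
  have h := (Measure.measurePreserving_swap (μ := (volume : Measure ℝ))
    (ν := (volume : Measure ℝ))).comp (h1.comp
    (Measure.measurePreserving_swap (μ := (volume : Measure ℝ)) (ν := (volume : Measure ℝ))))
  exact h

/-- Cyclic symmetry of the trilinear form in the `Hˢ` energy estimate. -/
theorem trilinear_cyclic_symmetry (s : ℝ) (hs : 0 ≤ s) (f : ℝ → ℂ)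
    (hmeas : Measurable f)
    (hreal : ∀ᵐ k : ℝ, f (-k) = (starRingEnd ℂ) (f k))
    (hint : Integrable (fun p : ℝ × ℝ =>
      (|p.1| ^ (2 * s + 1) + |p.1 - p.2| ^ (2 * s + 1) + |p.2| ^ (2 * s + 1)) *
        |Sker (p.1 - p.2) p.2| * ‖f (p.1 - p.2)‖ * ‖f p.2‖ * ‖f (-p.1)‖)) :
    ((∫ p : ℝ × ℝ, ((p.1 * |p.1| ^ (2 * s) : ℝ) : ℂ) * ((Sker (p.1 - p.2) p.2 : ℝ) : ℂ) *
        f (p.1 - p.2) * f p.2 * f (-p.1))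
      = -∫ p : ℝ × ℝ, (((p.1 - p.2) * |p.1 - p.2| ^ (2 * s) : ℝ) : ℂ) *
          ((Sker (p.1 - p.2) p.2 : ℝ) : ℂ) * f (p.1 - p.2) * f p.2 * f (-p.1)) ∧
    ((∫ p : ℝ × ℝ, ((p.1 * |p.1| ^ (2 * s) : ℝ) : ℂ) * ((Sker (p.1 - p.2) p.2 : ℝ) : ℂ) *
        f (p.1 - p.2) * f p.2 * f (-p.1))
      = -∫ p : ℝ × ℝ, ((p.2 * |p.2| ^ (2 * s) : ℝ) : ℂ) *
          ((Sker (p.1 - p.2) p.2 : ℝ) : ℂ) * f (p.1 - p.2) * f p.2 * f (-p.1)) ∧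
    ((∫ p : ℝ × ℝ, ((p.1 * |p.1| ^ (2 * s) : ℝ) : ℂ) * ((Sker (p.1 - p.2) p.2 : ℝ) : ℂ) *
        f (p.1 - p.2) * f p.2 * f (-p.1))
      = (1 / 3) * ∫ p : ℝ × ℝ,
          ((p.1 * |p.1| ^ (2 * s) - (p.1 - p.2) * |p.1 - p.2| ^ (2 * s) -
              p.2 * |p.2| ^ (2 * s) : ℝ) : ℂ) *
            ((Sker (p.1 - p.2) p.2 : ℝ) : ℂ) * f (p.1 - p.2) * f p.2 * f (-p.1)) := by
  have e1 : (∫ p : ℝ × ℝ, ((p.1 * |p.1| ^ (2 * s) : ℝ) : ℂ) *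
        ((Sker (p.1 - p.2) p.2 : ℝ) : ℂ) * f (p.1 - p.2) * f p.2 * f (-p.1))
      = -∫ p : ℝ × ℝ, (((p.1 - p.2) * |p.1 - p.2| ^ (2 * s) : ℝ) : ℂ) *
          ((Sker (p.1 - p.2) p.2 : ℝ) : ℂ) * f (p.1 - p.2) * f p.2 * f (-p.1) := by
    rw [← mp_invA.integral_comp', ← integral_neg]
    congr 1
    funext p
    obtain ⟨k, l⟩ := p
    change (((l - k) * |l - k| ^ (2 * s) : ℝ) : ℂ) * ((Sker (l - k - l) l : ℝ) : ℂ) *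
      f (l - k - l) * f l * f (-(l - k)) = -((((k - l) * |k - l| ^ (2 * s) : ℝ) : ℂ) *
      ((Sker (k - l) l : ℝ) : ℂ) * f (k - l) * f l * f (-k))
    have hS := Sker_swap_left (k - l) l
    rw [sub_add_cancel] at hS
    rw [abs_sub_comm l k, sub_sub_cancel_left, hS, neg_sub]
    push_cast
    ring
  have e2 : (∫ p : ℝ × ℝ, ((p.1 * |p.1| ^ (2 * s) : ℝ) : ℂ) *
        ((Sker (p.1 - p.2) p.2 : ℝ) : ℂ) * f (p.1 - p.2) * f p.2 * f (-p.1))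
      = -∫ p : ℝ × ℝ, ((p.2 * |p.2| ^ (2 * s) : ℝ) : ℂ) *
          ((Sker (p.1 - p.2) p.2 : ℝ) : ℂ) * f (p.1 - p.2) * f p.2 * f (-p.1) := by
    rw [← mp_invB.integral_comp', ← integral_neg]
    congr 1
    funext p
    obtain ⟨k, l⟩ := p
    change (((-l) * |-l| ^ (2 * s) : ℝ) : ℂ) * ((Sker (-l - -k) (-k) : ℝ) : ℂ) *
      f (-l - -k) * f (-k) * f (- -l) = -(((l * |l| ^ (2 * s) : ℝ) : ℂ) *
      ((Sker (k - l) l : ℝ) : ℂ) * f (k - l) * f l * f (-k))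
    have hS := Sker_swap_right (k - l) l
    rw [sub_add_cancel] at hS
    have h1 : -l - -k = k - l := by ring
    rw [h1, hS, abs_neg, neg_neg]
    push_cast
    ring
  have hSm : Measurable (fun p : ℝ × ℝ => Sker (p.1 - p.2) p.2) :=
    measurable_Sker.comp (f := fun p : ℝ × ℝ => (p.1 - p.2, p.2)) (by fun_prop)
  have key : ∀ g : ℝ × ℝ → ℝ, Measurable g →
      (∀ p, |g p| ^ (2 * s + 1) ≤
        |p.1| ^ (2 * s + 1) + |p.1 - p.2| ^ (2 * s + 1) + |p.2| ^ (2 * s + 1)) →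
      Integrable (fun p : ℝ × ℝ => ((g p * |g p| ^ (2 * s) : ℝ) : ℂ) *
          ((Sker (p.1 - p.2) p.2 : ℝ) : ℂ) * f (p.1 - p.2) * f p.2 * f (-p.1)) := by
    intro g hg hle
    refine hint.mono' (Measurable.aestronglyMeasurable ?_) ?_
    · fun_prop
    · filter_upwards with p
      have hgp : |g p| * |g p| ^ (2 * s) = |g p| ^ (2 * s + 1) := by
        rw [Real.rpow_add_one' (abs_nonneg _) (by positivity), mul_comm]
      simp only [norm_mul, Complex.norm_real, Real.norm_eq_abs]
      rw [abs_of_nonneg (Real.rpow_nonneg (abs_nonneg (g p)) (2 * s)), hgp]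
      gcongr
      exact hle p
  have nn : ∀ x : ℝ, 0 ≤ |x| ^ (2 * s + 1) := fun x => Real.rpow_nonneg (abs_nonneg x) _
  have i1 := key (fun p => p.1) (by fun_prop) (fun p => by
    have := nn p.1; have := nn (p.1 - p.2); have := nn p.2; linarith)
  have i2 := key (fun p => p.1 - p.2) (by fun_prop) (fun p => by
    have := nn p.1; have := nn (p.1 - p.2); have := nn p.2; linarith)
  have i3 := key (fun p => p.2) (by fun_prop) (fun p => by
    have := nn p.1; have := nn (p.1 - p.2); have := nn p.2; linarith)
  refine ⟨e1, e2, ?_⟩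
  have e3 : (∫ p : ℝ × ℝ,
          ((p.1 * |p.1| ^ (2 * s) - (p.1 - p.2) * |p.1 - p.2| ^ (2 * s) -
              p.2 * |p.2| ^ (2 * s) : ℝ) : ℂ) *
            ((Sker (p.1 - p.2) p.2 : ℝ) : ℂ) * f (p.1 - p.2) * f p.2 * f (-p.1))
      = (∫ p : ℝ × ℝ, ((p.1 * |p.1| ^ (2 * s) : ℝ) : ℂ) *
          ((Sker (p.1 - p.2) p.2 : ℝ) : ℂ) * f (p.1 - p.2) * f p.2 * f (-p.1))
        - (∫ p : ℝ × ℝ, (((p.1 - p.2) * |p.1 - p.2| ^ (2 * s) : ℝ) : ℂ) *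
          ((Sker (p.1 - p.2) p.2 : ℝ) : ℂ) * f (p.1 - p.2) * f p.2 * f (-p.1))
        - ∫ p : ℝ × ℝ, ((p.2 * |p.2| ^ (2 * s) : ℝ) : ℂ) *
          ((Sker (p.1 - p.2) p.2 : ℝ) : ℂ) * f (p.1 - p.2) * f p.2 * f (-p.1) := by
    rw [← integral_sub i1 i2]
    refine Eq.trans ?_ (integral_sub (i1.sub i2) i3)
    congr 1
    funext p
    push_cast
    ring
  rw [e3]
  linear_combination (1 / 3 : ℂ) * e1 + (1 / 3 : ℂ) * e2
end

section
/- Let S:ℝ²→ℝ be the kernel S(k,ℓ) = Λ(k,ℓ)/|kℓ(k+ℓ)|^{1/2} if kℓ(k+ℓ) ≠ 0 and 0 otherwise, with Λ(k,ℓ) = 2|k+ℓ|·|k|·|ℓ|/(|k+ℓ|+|k|+|ℓ|) for (k,ℓ)≠(0,0) and Λ(0,0)=0. Let f:ℝ→ℂ be measurable with f(−k) = conj(f(k)) for almost every k, and assume that (k,ℓ) ↦ (|k| + |k−ℓ| + |ℓ|) |S(k−ℓ,ℓ)| |f(k−ℓ)| |f(ℓ)| |f(−k)| is integrable on ℝ².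 Then ∬_{ℝ²} k · S(k−ℓ,ℓ) f(k−ℓ) f(ℓ) f(−k) dℓ dk = 0. -/
open MeasureTheory

lemma Sker_eq (k l : ℝ) : Sker k l =
    (2 * |k + l| * |k| * |l| / (|k + l| + |k| + |l|)) / Real.sqrt (|k| * |l| * |k + l|) := by
  unfold Sker Lam
  by_cases h : k * l * (k + l) = 0
  · have h2 : |k| * |l| * |k + l| = 0 := by rw [← abs_mul, ← abs_mul, h, abs_zero]
    simp [h, h2]
  · have : ¬ ((k, l) = ((0 : ℝ), (0 : ℝ))) := by
      rintro h'
      simp only [Prod.mk.injEq] at h'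
      apply h
      simp [h'.1]
    rw [if_pos h, if_neg this, abs_mul, abs_mul]

lemma Sker_swap1 (k l : ℝ) : Sker (k - l) (-k) = Sker (k - l) l := by
  rw [Sker_eq, Sker_eq]
  have h1 : k - l + -k = -l := by ring
  have h2 : k - l + l = k := by ring
  rw [h1, h2, abs_neg, abs_neg]
  congr 2 <;> ring_nf

lemma Sker_swap2 (k l : ℝ) : Sker (-k) l = Sker (k - l) l := by
  rw [Sker_eq, Sker_eq]
  have h1 : -k + l = -(k - l) := by ring
  have h2 : k - l + l = k := by ring
  rw [h1, h2, abs_neg, abs_neg]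
  congr 2 <;> ring_nf

lemma mp_T1 : MeasurePreserving (fun p : ℝ × ℝ => (-p.2, -p.1)) := by
  have h : MeasurePreserving (Prod.map (fun x : ℝ => -x) (fun x : ℝ => -x))
      (volume.prod volume) (volume.prod volume) :=
    (Measure.measurePreserving_neg volume).prod (Measure.measurePreserving_neg volume)
  exact h.comp (Measure.measurePreserving_swap (μ := (volume : Measure ℝ))
    (ν := (volume : Measure ℝ)))

lemma mp_T2 : MeasurePreserving (fun p : ℝ × ℝ => (p.2 - p.1, p.2)) := by
  have h : MeasurePreserving (fun p : ℝ × ℝ => (p.1, p.1 - p.2))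
      (volume.prod volume) (volume.prod volume) :=
    (MeasurePreserving.id volume).skew_product (g := fun x y : ℝ => x - y) (by fun_prop)
      (Filter.Eventually.of_forall fun x => (Measure.measurePreserving_sub_left volume x).map_eq)
  have hs := Measure.measurePreserving_swap (μ := (volume : Measure ℝ))
    (ν := (volume : Measure ℝ))
  exact hs.comp (h.comp hs)

lemma emb_invol (T : ℝ × ℝ → ℝ × ℝ) (hT : Measurable T) (h : ∀ p, T (T p) = p) :
    MeasurableEmbedding T :=
  (MeasurableEquiv.mk ⟨T, T, h, h⟩ hT hT).measurableEmbedding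

/-- Vanishing of the trilinear form at Sobolev index `s = 0`: the mechanism behind
conservation of the `L²` norm. -/
theorem trilinear_vanishes_s_zero (f : ℝ → ℂ)
    (hmeas : Measurable f)
    (hreal : ∀ᵐ k : ℝ, f (-k) = (starRingEnd ℂ) (f k))
    (hint : Integrable (fun p : ℝ × ℝ =>
      (|p.1| + |p.1 - p.2| + |p.2|) *
        |Sker (p.1 - p.2) p.2| * ‖f (p.1 - p.2)‖ * ‖f p.2‖ * ‖f (-p.1)‖)) :
    ∫ p : ℝ × ℝ, ((p.1 : ℝ) : ℂ) * ((Sker (p.1 - p.2) p.2 : ℝ) : ℂ) *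
        f (p.1 - p.2) * f p.2 * f (-p.1) = 0 := by
  set G : ℝ × ℝ → ℂ := fun p => ((p.1 : ℝ) : ℂ) * ((Sker (p.1 - p.2) p.2 : ℝ) : ℂ) *
        f (p.1 - p.2) * f p.2 * f (-p.1) with hG
  have e1 : MeasurableEmbedding (fun p : ℝ × ℝ => (-p.2, -p.1)) :=
    emb_invol _ (by fun_prop) (by intro p; simp)
  have e2 : MeasurableEmbedding (fun p : ℝ × ℝ => (p.2 - p.1, p.2)) :=
    emb_invol _ (by fun_prop) (by intro p; simp)
  by_cases hi : Integrable G
  · have i1 : Integrable (fun p : ℝ × ℝ => G (-p.2, -p.1)) := (mp_T1.integrable_comp_emb e1).2 hi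
    have i2 : Integrable (fun p : ℝ × ℝ => G (p.2 - p.1, p.2)) := (mp_T2.integrable_comp_emb e2).2 hi
    have s1 := mp_T1.integral_comp e1 G
    have s2 := mp_T2.integral_comp e2 G
    have key : ∀ p : ℝ × ℝ, G p + G (-p.2, -p.1) + G (p.2 - p.1, p.2) = 0 := by
      rintro ⟨k, l⟩
      have a1 : -l - -k = k - l := by ring
      have a2 : l - k - l = -k := by ring
      have a3 : -(l - k) = k - l := by ring
      simp only [hG, a1, a2, a3, neg_neg, Sker_swap1, Sker_swap2]
      push_cast
      ring
    have hsum : ∫ p : ℝ × ℝ, (G p + G (-p.2, -p.1) + G (p.2 - p.1, p.2)) = 0 := by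
      simp only [key, integral_zero]
    have i12 : Integrable (fun p : ℝ × ℝ => G p + G (-p.2, -p.1)) := hi.add i1
    rw [integral_add i12 i2, integral_add hi i1, s1, s2] at hsum
    have h3 : (3 : ℂ) * ∫ p, G p = 0 := by rw [← hsum]; ring
    simpa using h3
  · exact integral_undef hi
end
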